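/- arXiv:1411.1652 — 4 statements merged into one kernel-verified Lean document; each statement's English description precedes it below -/
import Mathlib

section
/- Let G be a connected simple graph on n ≥ 2 vertices with Laplacian L and Moore–Penrose pseudoinverse B of L, and set f = max_i B_{ii}. Suppose x : V → ℕ and d : V → ℤ satisfy L x = d, x_k = 0 for some vertex k, and ∑_i |d_i| ≤ 2N for a real number N ≥ 0. Then s := ∑_i x_i satisfies s ≤ 2·n·N·f. -/
open Matrix

/-!
The vector `B L x - x` lies in the kernel of `L`, so on a connected graph it is constant; its
value at `k` is `(B d) k` because `x k = 0`. As `B L` is symmetric and `L` annihilates constants,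
the entries of `B L x` sum to zero, whence `-s = n * (B d) k`. The pseudoinverse `B` of the positive
semidefinite `L` is itself positive semidefinite (`pinv_posSemidef`), so all its entries are bounded
in absolute value by its largest diagonal entry `f` (`abs_entry_le_of_posSemidef`), and
`|(B d) k| ≤ f * ∑ |d i| ≤ 2 N f`.
-/

/-- The transpose of a pseudoinverse of a symmetric `L` is again a pseudoinverse of `L`, so this is
the uniqueness of the pseudoinverse. -/
lemma pinv_symm {ι : Type*} [Fintype ι] {L B : Matrix ι ι ℝ} (hL : Lᵀ = L)
    (hB1 : L * B * L = L) (hB2 : B * L * B = B)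
    (hB3 : (L * B)ᵀ = L * B) (hB4 : (B * L)ᵀ = B * L) : Bᵀ = B := by
  rw [transpose_mul, hL] at hB3 hB4
  have hT1 : L * Bᵀ * L = L := by
    have := congrArg transpose hB1
    simpa [transpose_mul, hL, Matrix.mul_assoc] using this
  have hT2 : Bᵀ * L * Bᵀ = Bᵀ := by
    have := congrArg transpose hB2
    simpa [transpose_mul, hL, Matrix.mul_assoc] using this
  have hcomm : B * L = L * B := by
    calc B * L = B * (L * Bᵀ * L) := by rw [hT1]
      _ = (B * L) * (Bᵀ * L) := by simp only [Matrix.mul_assoc]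
      _ = (L * Bᵀ) * (L * B) := by rw [hB3, hB4]
      _ = (L * Bᵀ * L) * B := by simp only [Matrix.mul_assoc]
      _ = L * B := by rw [hT1]
  calc Bᵀ = Bᵀ * L * Bᵀ := hT2.symm
    _ = B * L * Bᵀ := by rw [hB3, hcomm]
    _ = B * (L * Bᵀ) := by rw [Matrix.mul_assoc]
    _ = B * L * B := by rw [hB4, Matrix.mul_assoc B L B, hcomm]
    _ = B := hB2

/-- With `B` symmetric, `B = Bᵀ L B` is a congruence transform of `L`. -/
lemma pinv_posSemidef {ι : Type*} [Fintype ι] {L B : Matrix ι ι ℝ} (hL : L.PosSemidef)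
    (hB1 : L * B * L = L) (hB2 : B * L * B = B)
    (hB3 : (L * B)ᵀ = L * B) (hB4 : (B * L)ᵀ = B * L) : B.PosSemidef := by
  have hLt : Lᵀ = L := by simpa using hL.isHermitian.eq
  have hs := pinv_symm hLt hB1 hB2 hB3 hB4
  have h := hL.conjTranspose_mul_mul_same B
  rwa [conjTranspose_eq_transpose_of_trivial, hs, hB2] at h

lemma abs_entry_le_of_posSemidef {ι : Type*} [Fintype ι] [DecidableEq ι] {B : Matrix ι ι ℝ}
    (hB : B.PosSemidef) {f : ℝ} (hf : ∀ i, B i i ≤ f) (i j : ι) : |B i j| ≤ f := by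
  have hs : B j i = B i j := by simpa using hB.isHermitian.apply i j
  -- Test the quadratic form on `e i + e j` and on `e i - e j`.
  have h1 := hB.dotProduct_mulVec_nonneg (Pi.single i 1 + Pi.single j 1)
  have h2 := hB.dotProduct_mulVec_nonneg (Pi.single i 1 - Pi.single j 1)
  simp [mulVec_add, mulVec_sub, add_dotProduct, sub_dotProduct, hs] at h1 h2
  have := hf i
  have := hf j
  rw [abs_le]
  constructor <;> linarith

/-- The duration `s = ∑ i, x i` of a terminating chip-firing game with `N` chips
on a connected graph `G` on `n ≥ 2` vertices satisfies `s ≤ 2 n N f`, where `f` is the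
largest diagonal entry of the Moore–Penrose pseudoinverse `B` of the Laplacian of `G`. -/
theorem chipFiring_duration_le_two_n_N_f
    {n : ℕ} (hn : 2 ≤ n)
    (G : SimpleGraph (Fin n)) [DecidableRel G.Adj]
    (hG : G.Connected)
    (B : Matrix (Fin n) (Fin n) ℝ)
    (hB1 : G.lapMatrix ℝ * B * G.lapMatrix ℝ = G.lapMatrix ℝ)
    (hB2 : B * G.lapMatrix ℝ * B = B)
    (hB3 : (G.lapMatrix ℝ * B)ᵀ = G.lapMatrix ℝ * B)
    (hB4 : (B * G.lapMatrix ℝ)ᵀ = B * G.lapMatrix ℝ)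
    (f : ℝ)
    (hf : IsGreatest (Set.range fun i => B i i) f)
    (x : Fin n → ℕ) (d : Fin n → ℤ)
    (hLx : G.lapMatrix ℤ *ᵥ (fun i => (x i : ℤ)) = d)
    (k : Fin n) (hk : x k = 0)
    (N : ℝ) (hN0 : 0 ≤ N) (hN : (∑ i, |(d i : ℝ)|) ≤ 2 * N) :
    ((∑ i, x i : ℕ) : ℝ) ≤ 2 * n * N * f := by
  set L := G.lapMatrix ℝ with hLdef
  have hps : B.PosSemidef :=
    pinv_posSemidef (G.posSemidef_lapMatrix ℝ) hB1 hB2 hB3 hB4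
  have hentry := abs_entry_le_of_posSemidef hps (fun i => hf.2 ⟨i, rfl⟩)
  set X : Fin n → ℝ := fun i => (x i : ℝ) with hX
  have hd : L *ᵥ X = fun i => (d i : ℝ) := by
    ext i
    rw [← hLx]
    simp [hLdef, hX, SimpleGraph.lapMatrix_mulVec_apply]
  set y : Fin n → ℝ := B *ᵥ (L *ᵥ X) - X with hy
  have hker : L *ᵥ y = 0 := by
    rw [hy, mulVec_sub, mulVec_mulVec, mulVec_mulVec, hB1, sub_self]
  have hconst : ∀ i, y i = y k := fun i =>
    (G.lapMatrix_mulVec_eq_zero_iff_forall_reachable.1 hker) i k (hG.preconnected i k)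
  have hsum0 : ∑ i, (B *ᵥ (L *ᵥ X)) i = 0 := by
    have h1 : (fun _ => (1 : ℝ)) ᵥ* (B * L) = 0 := by
      rw [← hB4, vecMul_transpose, ← mulVec_mulVec, hLdef,
        G.lapMatrix_mulVec_const_eq_zero, mulVec_zero]
    have h2 : (fun _ => (1 : ℝ)) ⬝ᵥ ((B * L) *ᵥ X) = 0 := by
      rw [dotProduct_mulVec, h1, zero_dotProduct]
    simpa [dotProduct, mulVec_mulVec] using h2
  have hsumy : ∑ i, y i = n * y k := by
    simp [hconst]
  have hsumy' : ∑ i, y i = -∑ i, X i := by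
    simp only [hy, Pi.sub_apply, Finset.sum_sub_distrib, hsum0, zero_sub]
  have hyk : y k = ∑ j, B k j * (d j : ℝ) := by
    rw [hy, hd]
    simp [hX, hk, mulVec, dotProduct]
  have hf0 : 0 ≤ f := (abs_nonneg _).trans (hentry k k)
  have hbound : |y k| ≤ f * (2 * N) := by
    rw [hyk]
    calc |∑ j, B k j * (d j : ℝ)| ≤ ∑ j, |B k j * (d j : ℝ)| := Finset.abs_sum_le_sum_abs _ _
      _ ≤ ∑ j, f * |(d j : ℝ)| := by
        refine Finset.sum_le_sum fun j _ => ?_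
        rw [abs_mul]
        exact mul_le_mul_of_nonneg_right (hentry k j) (abs_nonneg _)
      _ = f * ∑ j, |(d j : ℝ)| := by rw [Finset.mul_sum]
      _ ≤ f * (2 * N) := mul_le_mul_of_nonneg_left hN hf0
  have hs : ((∑ i, x i : ℕ) : ℝ) = n * (-y k) := by
    push_cast
    change ∑ i, X i = _
    linarith
  rw [hs]
  calc (n : ℝ) * (-y k) ≤ n * (f * (2 * N)) :=
        mul_le_mul_of_nonneg_left ((neg_le_abs _).trans hbound) (Nat.cast_nonneg n)
    _ = 2 * n * N * f := by ring
end

section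
/- Let G be a connected simple graph on n ≥ 2 vertices with minimum degree δ, Laplacian L with eigenvalues 0 = λ₁ < λ₂ ≤ … ≤ λ_n. Suppose x : V → ℕ and d : V → ℤ satisfy L x = d, x_k = 0 for some vertex k, and ∑_i |d_i| ≤ 2N for a real number N ≥ 0. Then s := ∑_i x_i satisfies s ≤ 2·n·N·(λ₂ + λ_n·(n−1)/n − δ)/(λ₂·λ_n). -/
/-!
Write `L` for the Laplacian. For each vertex `j` let `P j` be the `j`-th column of the
pseudoinverse of `L`, that is the solution of `L (P j) = e_j - 1/n` with zero coordinate sum.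
Pairing `P k` with `d = L x` gives `⟨P k, d⟩ = x k - s / n = -s / n`, so that
`s = -n ∑ j, P k j * d j ≤ n * max_j |P k j| * 2 N`.

The pseudoinverse is positive semidefinite, hence `2 |P k j| ≤ P k k + P j j`, and it suffices to
bound its diagonal (`lap_potential_entry_bound`). Every eigenvalue `μ` of `L` satisfies
`μ (μ - λ₂) (λ_n - μ) ≥ 0`, which is the chord bound `1 / μ ≤ (λ₂ + λ_n - μ) / (λ₂ λ_n)` when
`μ ≠ 0`. Evaluated at `P j` (`spectral_cubic_nonneg`) it yields
`λ₂ λ_n P j j ≤ (λ₂ + λ_n) (1 - 1/n) - deg j`, which is at most `λ₂ + λ_n (n-1)/n - δ`.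
-/

open Matrix

/-- If every eigenvalue `μ` of a symmetric matrix `A` satisfies `0 ≤ μ (μ - a) (b - μ)`, then the
quadratic form of `A (A - a) (b - A)` is nonnegative; it is written out with powers of `A`
distributed over both sides of the dot products. -/
theorem spectral_cubic_nonneg {n : ℕ} {A : Matrix (Fin n) (Fin n) ℝ} (hA : A.IsHermitian)
    (a b : ℝ)
    (h : ∀ μ : ℝ, (∃ v : Fin n → ℝ, v ≠ 0 ∧ A *ᵥ v = μ • v) → 0 ≤ μ * ((μ - a) * (b - μ)))
    (v : Fin n → ℝ) :
    a * b * (v ⬝ᵥ A *ᵥ v) ≤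
      (a + b) * ((A *ᵥ v) ⬝ᵥ (A *ᵥ v)) - (A *ᵥ v) ⬝ᵥ (A *ᵥ (A *ᵥ v)) := by
  set U : Matrix (Fin n) (Fin n) ℝ := hA.eigenvectorUnitary.val with hU
  set μ := hA.eigenvalues with hμ
  have hUU : Uᵀ * U = 1 := by
    have := Unitary.coe_star_mul_self hA.eigenvectorUnitary
    rwa [star_eq_conjTranspose, conjTranspose_eq_transpose_of_trivial] at this
  have hUU' : U * Uᵀ = 1 := mul_eq_one_comm.mp hUU
  have hdot : ∀ y z : Fin n → ℝ, (U *ᵥ y) ⬝ᵥ (U *ᵥ z) = y ⬝ᵥ z := fun y z => by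
    rw [dotProduct_mulVec, vecMul_mulVec, hUU, vecMul_one]
  have hAU : ∀ y : Fin n → ℝ, A *ᵥ (U *ᵥ y) = U *ᵥ (fun i => μ i * y i) := fun y => by
    have hs : A = U * diagonal μ * Uᵀ := by
      have := hA.spectral_theorem
      rw [Unitary.conjStarAlgAut_apply, star_eq_conjTranspose,
        conjTranspose_eq_transpose_of_trivial] at this
      exact this
    rw [hs, mulVec_mulVec, Matrix.mul_assoc, hUU, Matrix.mul_one, ← mulVec_mulVec]
    congr 1
    ext i
    rw [mulVec_diagonal]
  have hv : v = U *ᵥ (Uᵀ *ᵥ v) := by rw [mulVec_mulVec, hUU', one_mulVec]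
  generalize Uᵀ *ᵥ v = c at hv
  subst hv
  simp only [hAU, hdot]
  simp only [dotProduct, Finset.mul_sum, ← Finset.sum_sub_distrib]
  refine Finset.sum_le_sum fun i _ => ?_
  have hi : 0 ≤ μ i * ((μ i - a) * (b - μ i)) := by
    refine h _ ⟨hA.eigenvectorBasis i, fun h0 => ?_, hA.mulVec_eigenvectorBasis i⟩
    apply hA.eigenvectorBasis.toBasis.ne_zero i
    ext l
    simpa using congrFun h0 l
  nlinarith [mul_nonneg hi (sq_nonneg (c i))]

theorem lap_dot_symm {n : ℕ} (G : SimpleGraph (Fin n)) [DecidableRel G.Adj]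
    (v w : Fin n → ℝ) : v ⬝ᵥ (G.lapMatrix ℝ *ᵥ w) = (G.lapMatrix ℝ *ᵥ v) ⬝ᵥ w := by
  rw [dotProduct_mulVec, ← mulVec_transpose, (G.isSymm_lapMatrix (R := ℝ)).eq]

theorem lap_sum_eq_zero {n : ℕ} (G : SimpleGraph (Fin n)) [DecidableRel G.Adj]
    (v : Fin n → ℝ) : ∑ i, (G.lapMatrix ℝ *ᵥ v) i = 0 := by
  have h := lap_dot_symm G (fun _ => 1) v
  rw [G.lapMatrix_mulVec_const_eq_zero, zero_dotProduct] at h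
  simpa [dotProduct] using h

/-- The `k`-th column of the pseudoinverse of the Laplacian of a connected graph exists. -/
theorem exists_lap_potential {n : ℕ} (hn : 2 ≤ n) (G : SimpleGraph (Fin n)) [DecidableRel G.Adj]
    (hG : G.Connected) (k : Fin n) :
    ∃ p : Fin n → ℝ, ∑ i, p i = 0 ∧
      G.lapMatrix ℝ *ᵥ p = fun i => (if i = k then 1 else 0) - 1 / (n : ℝ) := by
  have hn0 : (n : ℝ) ≠ 0 := by positivity
  -- Adding the all-ones matrix to the Laplacian makes it invertible.
  let T : (Fin n → ℝ) →ₗ[ℝ] (Fin n → ℝ) :=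
    (G.lapMatrix ℝ + Matrix.of fun _ _ => (1 : ℝ)).mulVecLin
  have hT : ∀ v i, T v i = (G.lapMatrix ℝ *ᵥ v) i + ∑ j, v j := fun v i => by
    simp only [T, mulVecLin_apply, add_mulVec, Pi.add_apply]
    congr 1
    simp [mulVec, dotProduct]
  have hTsum : ∀ v, ∑ i, T v i = n * ∑ j, v j := fun v => by
    simp [hT, Finset.sum_add_distrib, lap_sum_eq_zero]
  have hinj : Function.Injective T := by
    rw [injective_iff_map_eq_zero]
    intro v hv
    have hs : ∑ j, v j = 0 := by
      have := hTsum v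
      rw [hv] at this
      simpa [hn0] using this
    have hL : G.lapMatrix ℝ *ᵥ v = 0 := by
      ext i
      have := hT v i
      rw [hv, hs] at this
      simpa using this.symm
    rw [G.lapMatrix_mulVec_eq_zero_iff_forall_reachable] at hL
    ext i
    have hc : ∑ j, v j = n * v i := by
      rw [Finset.sum_congr rfl fun j _ => hL j i (hG.preconnected j i)]
      simp
    rw [hs] at hc
    simpa [hn0] using hc.symm
  obtain ⟨q, hq⟩ := (LinearMap.injective_iff_surjective.mp hinj) (fun i => if i = k then 1 else 0)
  have hqs : ∑ j, q j = 1 / n := by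
    have := hTsum q
    rw [hq] at this
    field_simp
    simpa [mul_comm] using this.symm
  refine ⟨q - (1 / n ^ 2 : ℝ) • fun _ => 1, ?_, ?_⟩
  · simp only [Pi.sub_apply, Pi.smul_apply, Finset.sum_sub_distrib, hqs]
    simp
    field_simp
    simp
  · rw [mulVec_sub, mulVec_smul, G.lapMatrix_mulVec_const_eq_zero]
    ext i
    have := hT q i
    rw [hq, hqs] at this
    simp only [Pi.sub_apply, smul_zero, Pi.zero_apply]
    linarith

/-- Bound on the entries of the pseudoinverse of the Laplacian, whose columns are the `P k`. -/
theorem lap_potential_entry_bound {n : ℕ} (hn : 2 ≤ n)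
    (G : SimpleGraph (Fin n)) [DecidableRel G.Adj]
    (lam2 lamn : ℝ) (h2 : 0 < lam2) (hle : lam2 ≤ lamn)
    (h : ∀ μ : ℝ, (∃ v : Fin n → ℝ, v ≠ 0 ∧ G.lapMatrix ℝ *ᵥ v = μ • v) →
      0 ≤ μ * ((μ - lam2) * (lamn - μ)))
    (P : Fin n → Fin n → ℝ) (hPsum : ∀ k, ∑ i, P k i = 0)
    (hP : ∀ k, G.lapMatrix ℝ *ᵥ P k = fun i => (if i = k then 1 else 0) - 1 / (n : ℝ))
    (k j : Fin n) :
    |P k j| ≤ (lam2 + lamn * ((n : ℝ) - 1) / n - G.minDegree) / (lam2 * lamn) := by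
  have hn0 : (0 : ℝ) < n := by positivity
  have hdot : ∀ (v : Fin n → ℝ) (k), v ⬝ᵥ (G.lapMatrix ℝ *ᵥ P k) = v k - (∑ i, v i) / n :=
    fun v k => by
      rw [hP]
      simp [dotProduct, mul_sub, Finset.sum_sub_distrib, ← Finset.sum_mul, div_eq_mul_inv]
  have hPP : ∀ i j, P i ⬝ᵥ (G.lapMatrix ℝ *ᵥ P j) = P i j := fun i j => by
    rw [hdot, hPsum]; simp
  have hsymm : ∀ i j, P i j = P j i := fun i j => by
    rw [← hPP, lap_dot_symm, dotProduct_comm, hPP]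
  have hdiag : ∀ j, P j j ≤
      (lam2 + lamn * ((n : ℝ) - 1) / n - G.minDegree) / (lam2 * lamn) := fun j => by
    have hc := spectral_cubic_nonneg (G.isHermitian_lapMatrix (R := ℝ)) lam2 lamn h (P j)
    have h1 : (G.lapMatrix ℝ *ᵥ P j) ⬝ᵥ (G.lapMatrix ℝ *ᵥ P j) = 1 - 1 / n := by
      rw [hdot, lap_sum_eq_zero, hP]; simp
    have hLL : (G.lapMatrix ℝ *ᵥ (G.lapMatrix ℝ *ᵥ P j)) j = G.degree j := by
      have he : G.lapMatrix ℝ *ᵥ P j = Pi.single j 1 - (1 / n : ℝ) • fun _ => 1 := by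
        rw [hP]; ext i; simp [Pi.single_apply]
      rw [he, mulVec_sub, mulVec_smul, G.lapMatrix_mulVec_const_eq_zero]
      simp [SimpleGraph.lapMatrix, SimpleGraph.degMatrix]
    have h3 : (G.lapMatrix ℝ *ᵥ P j) ⬝ᵥ (G.lapMatrix ℝ *ᵥ (G.lapMatrix ℝ *ᵥ P j))
        = G.degree j := by
      rw [dotProduct_comm, hdot, lap_sum_eq_zero, hLL]; simp
    rw [hPP, h1, h3] at hc
    have hd : (G.minDegree : ℝ) ≤ G.degree j := by exact_mod_cast G.minDegree_le_degree j
    rw [le_div_iff₀ (mul_pos h2 (h2.trans_le hle))]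
    have e1 : lamn * ((n : ℝ) - 1) / n = lamn * (1 - 1 / n) := by field_simp
    have e2 : 0 < lam2 * (1 / (n : ℝ)) := by positivity
    rw [e1]
    nlinarith
  have hpos : ∀ v : Fin n → ℝ, 0 ≤ v ⬝ᵥ (G.lapMatrix ℝ *ᵥ v) := fun v => by
    simpa using (G.posSemidef_lapMatrix ℝ).dotProduct_mulVec_nonneg v
  have ha := hpos (P k + P j)
  have hb := hpos (P k - P j)
  simp only [mulVec_add, mulVec_sub, add_dotProduct, sub_dotProduct, dotProduct_add,
    dotProduct_sub, hPP, hsymm j k] at ha hb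
  have := hdiag k
  have := hdiag j
  rw [abs_le]
  constructor <;> linarith

/-- For a connected graph `G` on `n ≥ 2` vertices with minimum degree `δ` and Laplacian
eigenvalues `0 = λ₁ < λ₂ ≤ … ≤ λ_n`, the duration `s = ∑ i, x i` of a terminating
chip-firing game with `N` chips satisfies
`s ≤ 2 n N (λ₂ + λ_n (n-1)/n - δ)/(λ₂ λ_n)`. -/
theorem chipFiring_duration_improved_bls_bound
    {n : ℕ} (hn : 2 ≤ n)
    (G : SimpleGraph (Fin n)) [DecidableRel G.Adj]
    (hG : G.Connected)
    (lam2 : ℝ) (hl2pos : 0 < lam2)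
    (hl2eig : ∃ v : Fin n → ℝ, v ≠ 0 ∧ G.lapMatrix ℝ *ᵥ v = lam2 • v)
    (hl2min : ∀ μ : ℝ, μ ≠ 0 →
      (∃ v : Fin n → ℝ, v ≠ 0 ∧ G.lapMatrix ℝ *ᵥ v = μ • v) → lam2 ≤ μ)
    (lamn : ℝ)
    (hlneig : ∃ v : Fin n → ℝ, v ≠ 0 ∧ G.lapMatrix ℝ *ᵥ v = lamn • v)
    (hlnmax : ∀ μ : ℝ,
      (∃ v : Fin n → ℝ, v ≠ 0 ∧ G.lapMatrix ℝ *ᵥ v = μ • v) → μ ≤ lamn)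
    (x : Fin n → ℕ) (d : Fin n → ℤ)
    (hLx : G.lapMatrix ℤ *ᵥ (fun i => (x i : ℤ)) = d)
    (k : Fin n) (hk : x k = 0)
    (N : ℝ) (hN0 : 0 ≤ N) (hN : (∑ i, |(d i : ℝ)|) ≤ 2 * N) :
    ((∑ i, x i : ℕ) : ℝ) ≤
      2 * n * N * (lam2 + lamn * ((n : ℝ) - 1) / n - (G.minDegree : ℝ)) / (lam2 * lamn) := by
  have hle : lam2 ≤ lamn := hlnmax _ hl2eig
  have hspec : ∀ μ : ℝ, (∃ v : Fin n → ℝ, v ≠ 0 ∧ G.lapMatrix ℝ *ᵥ v = μ • v) →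
      0 ≤ μ * ((μ - lam2) * (lamn - μ)) := fun μ hμ => by
    by_cases h0 : μ = 0
    · simp [h0]
    · have h1 := hl2min μ h0 hμ
      have h2 := hlnmax μ hμ
      exact mul_nonneg (hl2pos.le.trans h1) (mul_nonneg (by linarith) (by linarith))
  choose P hPsum hP using exists_lap_potential hn G hG
  have hbound := lap_potential_entry_bound hn G lam2 lamn hl2pos hle hspec P hPsum hP k
  set C := (lam2 + lamn * ((n : ℝ) - 1) / n - (G.minDegree : ℝ)) / (lam2 * lamn) with hC
  have hC0 : 0 ≤ C := (abs_nonneg _).trans (hbound k)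
  have hn0 : (0 : ℝ) < n := by positivity
  have hLxR : G.lapMatrix ℝ *ᵥ (fun i => (x i : ℝ)) = fun i => (d i : ℝ) := by
    ext i
    rw [← hLx, G.lapMatrix_mulVec_apply, G.lapMatrix_mulVec_apply]
    push_cast
    rfl
  have hs : ∑ j, P k j * (d j : ℝ) = -((∑ i, x i : ℕ) : ℝ) / n := by
    have h1 := lap_dot_symm G (P k) (fun i => (x i : ℝ))
    rw [hLxR, hP] at h1
    simp only [dotProduct] at h1
    rw [h1]
    simp [sub_mul, Finset.sum_sub_distrib, ← Finset.mul_sum, hk]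
    ring
  have hs2 : ((∑ i, x i : ℕ) : ℝ) = n * -∑ j, P k j * (d j : ℝ) := by
    rw [hs]; field_simp
  have hle2 : -∑ j, P k j * (d j : ℝ) ≤ C * (2 * N) := by
    calc -∑ j, P k j * (d j : ℝ) ≤ |∑ j, P k j * (d j : ℝ)| := neg_le_abs _
      _ ≤ ∑ j, |P k j * (d j : ℝ)| := Finset.abs_sum_le_sum_abs _ _
      _ ≤ ∑ j, C * |(d j : ℝ)| := Finset.sum_le_sum fun j _ => by
          rw [abs_mul]; exact mul_le_mul_of_nonneg_right (hbound j) (abs_nonneg _)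
      _ = C * ∑ j, |(d j : ℝ)| := by rw [Finset.mul_sum]
      _ ≤ C * (2 * N) := mul_le_mul_of_nonneg_left hN hC0
  calc ((∑ i, x i : ℕ) : ℝ) ≤ n * (C * (2 * N)) := by
        rw [hs2]; exact mul_le_mul_of_nonneg_left hle2 hn0.le
    _ = _ := by rw [hC]; ring
end

section
/- Let G be a connected strongly regular graph with parameters (n, k, a, c), not complete (so c ≥ 1), with Laplacian L and Moore–Penrose pseudoinverse B of L. Then for distinct vertices i and j: if i and j are adjacent then B_{ij} = (n − 2k + a − c)/(n²·c), and if i and j are not adjacent then B_{ij} = (a − c − 2k)/(n²·c). -/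
/-!
Write `A` for the adjacency matrix, `J` for the all-ones matrix and `s = 2k - a + c`.
Strong regularity says `A² = (k - c) I + (a - c) A + c J`. Substituting `A = k I - L` turns this
into a quadratic equation for `L` whose constant term is forced to be `-cn` by `L J = 0`:
`L² = s L - cn I + c J` (`lapMatrix_sq_of_srg`). As `c ≠ 0` for a connected non-complete graph
(`mu_ne_zero_of_connected`), the matrix `M = (s I - L) / (cn) - (s / (cn²)) J` satisfies
`L M = M L = I - J / n`, hence is a Moore–Penrose pseudoinverse of `L`. By uniqueness
(`pinv_unique`) `B = M`, and the off-diagonal entries are read off from `M`.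
-/

open Matrix

/-- The Moore–Penrose equations have at most one solution. -/
lemma pinv_unique {V : Type*} [Fintype V] (L B M : Matrix V V ℝ)
    (hB1 : L * B * L = L) (hB2 : B * L * B = B)
    (hB3 : (L * B)ᵀ = L * B) (hB4 : (B * L)ᵀ = B * L)
    (hM1 : L * M * L = L) (hM2 : M * L * M = M)
    (hM3 : (L * M)ᵀ = L * M) (hM4 : (M * L)ᵀ = M * L) : B = M := by
  have h1 : B * L = M * L := by
    calc B * L = (B * (L * M * L))ᵀ := by rw [hM1, hB4]
      _ = ((B * L) * (M * L))ᵀ := by simp only [Matrix.mul_assoc]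
      _ = (M * L) * (B * L) := by rw [transpose_mul, hB4, hM4]
      _ = M * (L * B * L) := by simp only [Matrix.mul_assoc]
      _ = M * L := by rw [hB1]
  have h2 : L * B = L * M := by
    calc L * B = ((L * M * L) * B)ᵀ := by rw [hM1, hB3]
      _ = ((L * M) * (L * B))ᵀ := by simp only [Matrix.mul_assoc]
      _ = (L * B) * (L * M) := by rw [transpose_mul, hB3, hM3]
      _ = (L * B * L) * M := by simp only [Matrix.mul_assoc]
      _ = L * M := by rw [hB1]
  calc B = B * L * B := hB2.symm
    _ = M * (L * B) := by rw [h1, Matrix.mul_assoc]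
    _ = M * L * M := by rw [h2, Matrix.mul_assoc]
    _ = M := hM2

/-- If `c = 0`, adjacent-or-equal is a transitive relation, so a connected graph is complete. -/
lemma mu_ne_zero_of_connected {V : Type*} [Fintype V]
    (G : SimpleGraph V) [DecidableRel G.Adj] {n k a c : ℕ}
    (hsrg : G.IsSRGWith n k a c) (hG : G.Connected) (hnc : G ≠ ⊤) : c ≠ 0 := by
  rintro rfl
  apply hnc
  have key : ∀ u v : V, G.Walk u v → u = v ∨ G.Adj u v := by
    intro u v p
    induction p with
    | nil => exact Or.inl rfl
    | @cons u v w h p ih =>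
      rcases ih with rfl | ih
      · exact Or.inr h
      · by_contra! hcon
        have h0 := hsrg.of_not_adj hcon.1 hcon.2
        rw [Fintype.card_eq_zero_iff] at h0
        exact h0.false ⟨v, h, ih.symm⟩
  ext u v
  rw [SimpleGraph.top_adj]
  refine ⟨fun h => h.ne, fun h => ?_⟩
  obtain ⟨p⟩ := hG.preconnected u v
  exact (key u v p).resolve_left h

/-- `L² = (2k - a + c) L - cn I + c J`. -/
lemma lapMatrix_sq_of_srg {V : Type*} [Fintype V] [DecidableEq V]
    (G : SimpleGraph V) [DecidableRel G.Adj] {n k a c : ℕ}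
    (hsrg : G.IsSRGWith n k a c) (J : Matrix V V ℝ) (hJ : J = Matrix.of fun _ _ => 1)
    (hLJ : G.lapMatrix ℝ * J = 0) (hJJ : J * J = (n : ℝ) • J) (v : V) :
    G.lapMatrix ℝ * G.lapMatrix ℝ =
      (2 * k - a + c : ℝ) • G.lapMatrix ℝ - (c * n : ℝ) • (1 : Matrix V V ℝ) + (c : ℝ) • J := by
  have hL : G.adjMatrix ℝ = (k : ℝ) • (1 : Matrix V V ℝ) - G.lapMatrix ℝ := by
    ext i j
    by_cases h : i = j
    · subst h
      simp [SimpleGraph.lapMatrix, SimpleGraph.degMatrix, hsrg.regular.degree_eq]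
    · simp [SimpleGraph.lapMatrix, SimpleGraph.degMatrix, h]
  have hc : Gᶜ.adjMatrix ℝ = J - 1 - G.adjMatrix ℝ := by
    ext x y
    by_cases h : x = y
    · simp [hJ, h]
    · by_cases h' : G.Adj x y <;> simp [hJ, h, h']
  have hA := hsrg.matrix_eq (α := ℝ)
  rw [hc, hL, sq] at hA
  simp only [← Nat.cast_smul_eq_nsmul ℝ] at hA
  -- the quadratic equation with its constant term still expressed through `k`, `a`, `c`
  have hq : G.lapMatrix ℝ * G.lapMatrix ℝ = (2 * k - a + c : ℝ) • G.lapMatrix ℝ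
      + (k - k ^ 2 - c + (a - c) * k : ℝ) • (1 : Matrix V V ℝ) + (c : ℝ) • J := by
    have e : ((k : ℝ) • (1 : Matrix V V ℝ) - G.lapMatrix ℝ) *
        ((k : ℝ) • (1 : Matrix V V ℝ) - G.lapMatrix ℝ) = (k ^ 2 : ℝ) • (1 : Matrix V V ℝ)
        - (2 * k : ℝ) • G.lapMatrix ℝ + G.lapMatrix ℝ * G.lapMatrix ℝ := by
      simp only [sub_mul, mul_sub, smul_mul_assoc, mul_smul_comm, one_mul, mul_one]
      module
    rw [e, ← eq_sub_iff_add_eq'] at hA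
    rw [hA]
    module
  have hconst : (k - k ^ 2 - c + (a - c) * k : ℝ) = -(c * n) := by
    have h := congrArg (fun X : Matrix V V ℝ => (X * J) v v) hq
    simp only [add_mul, smul_mul_assoc, one_mul, Matrix.mul_assoc, hLJ, hJJ] at h
    simp [hJ] at h
    linarith
  rw [hq, hconst]
  module

/-- For a connected, non-complete strongly regular graph with parameters `(n, k, a, c)`,
the off-diagonal entries of the Moore–Penrose pseudoinverse `B` of the Laplacian are
`(n - 2k + a - c)/(n² c)` for adjacent pairs and `(a - c - 2k)/(n² c)` for
non-adjacent pairs. -/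
theorem srg_lapMatrix_pinv_offdiag_eq
    {V : Type*} [Fintype V] [DecidableEq V]
    (G : SimpleGraph V) [DecidableRel G.Adj]
    {n k a c : ℕ}
    (hsrg : G.IsSRGWith n k a c)
    (hG : G.Connected)
    (hnc : G ≠ ⊤)
    (B : Matrix V V ℝ)
    (hB1 : G.lapMatrix ℝ * B * G.lapMatrix ℝ = G.lapMatrix ℝ)
    (hB2 : B * G.lapMatrix ℝ * B = B)
    (hB3 : (G.lapMatrix ℝ * B)ᵀ = G.lapMatrix ℝ * B)
    (hB4 : (B * G.lapMatrix ℝ)ᵀ = B * G.lapMatrix ℝ) :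
    ∀ i j : V, i ≠ j →
      (G.Adj i j →
        B i j = ((n : ℝ) - 2 * k + (a : ℝ) - c) / ((n : ℝ) ^ 2 * c)) ∧
      (¬ G.Adj i j →
        B i j = ((a : ℝ) - c - 2 * k) / ((n : ℝ) ^ 2 * c)) := by
  intro i j hij
  have hc0 : (c : ℝ) ≠ 0 := by exact_mod_cast mu_ne_zero_of_connected G hsrg hG hnc
  have hn0 : (n : ℝ) ≠ 0 := by
    have : 0 < Fintype.card V := Fintype.card_pos_iff.mpr ⟨i⟩
    rw [hsrg.card] at this
    exact_mod_cast this.ne'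
  obtain ⟨J, hJ⟩ : ∃ J : Matrix V V ℝ, J = Matrix.of fun _ _ => 1 := ⟨_, rfl⟩
  have hJt : Jᵀ = J := by subst hJ; rfl
  have hJJ : J * J = (n : ℝ) • J := by
    subst hJ
    ext x y
    simp [Matrix.mul_apply, hsrg.card]
  have hLJ : G.lapMatrix ℝ * J = 0 := by
    subst hJ
    ext x y
    exact congrFun (G.lapMatrix_mulVec_const_eq_zero (R := ℝ)) x
  have hLt : (G.lapMatrix ℝ)ᵀ = G.lapMatrix ℝ := G.isSymm_lapMatrix ℝ
  have hJL : J * G.lapMatrix ℝ = 0 := by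
    have := congrArg Matrix.transpose hLJ
    rwa [transpose_mul, hJt, hLt, transpose_zero] at this
  have hq := lapMatrix_sq_of_srg G hsrg J hJ hLJ hJJ i
  have hoff : G.lapMatrix ℝ i j = if G.Adj i j then -1 else 0 := by
    by_cases h : G.Adj i j <;> simp [SimpleGraph.lapMatrix, SimpleGraph.degMatrix, hij, h]
  generalize G.lapMatrix ℝ = L at *
  obtain ⟨s, hs⟩ : ∃ s : ℝ, s = 2 * k - a + c := ⟨_, rfl⟩
  rw [← hs] at hq
  obtain ⟨M, hM⟩ : ∃ M : Matrix V V ℝ, M = (s / (c * n)) • (1 : Matrix V V ℝ)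
      - (1 / (c * n) : ℝ) • L - (s / (c * n ^ 2)) • J := ⟨_, rfl⟩
  have hLM : L * M = 1 - (1 / n : ℝ) • J := by
    rw [hM]
    simp only [mul_sub, mul_smul_comm, mul_one, hLJ, hq]
    match_scalars <;> field_simp <;> ring
  have hML : M * L = 1 - (1 / n : ℝ) • J := by
    rw [hM]
    simp only [sub_mul, smul_mul_assoc, one_mul, hJL, hq]
    match_scalars <;> field_simp <;> ring
  have hJM : J * M = 0 := by
    rw [hM]
    simp only [mul_sub, mul_smul_comm, mul_one, hJL, hJJ]
    match_scalars
    field_simp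
    ring
  have hPt : (1 - (1 / n : ℝ) • J)ᵀ = 1 - (1 / n : ℝ) • J := by
    rw [transpose_sub, transpose_smul, hJt, transpose_one]
  have hBM : B = M := by
    refine pinv_unique L B M hB1 hB2 hB3 hB4 ?_ ?_ ?_ ?_
    · rw [hLM, sub_mul, smul_mul_assoc, hJL, one_mul, smul_zero, sub_zero]
    · rw [hML, sub_mul, smul_mul_assoc, hJM, one_mul, smul_zero, sub_zero]
    · rw [hLM, hPt]
    · rw [hML, hPt]
  have hentry : B i j = -(1 / (c * n) : ℝ) * L i j - s / (c * n ^ 2) := by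
    rw [hBM, hM]
    simp [hJ, hij]
  rw [hentry, hoff, hs]
  constructor
  · intro h
    rw [if_pos h]
    field_simp
    ring
  · intro h
    rw [if_neg h]
    field_simp
    ring
end

section
/- Let G be a connected strongly regular graph with parameters (n, k, a, c), not complete (so c ≥ 1), with Laplacian L and Moore–Penrose pseudoinverse B of L. Then o = max_{i≠j} |B_{ij}| ≤ 2/(n·c). -/
/-!
Write `A` for the adjacency matrix, `J` for the all-ones matrix and `s = 2k - a + c`. Strong
regularity turns into the quadratic identity `L² = s L - n c I + c J`, so the pseudoinverse is
explicitly affine in `L`: multiplying by `B` and using `L B L = L`, `L J = J L = 0`, `B J = 0` gives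
`n c B L = n c I - c J` and then `n² c² B = s (n c I - c J) - n c L`. An off-diagonal entry
thus satisfies `n² c B i j = n A i j - s`, and the bound follows from `0 ≤ s ≤ 2n`, where
the upper bound combines `2k - a ≤ n` (the union of the neighbourhoods of two adjacent vertices)
with `c ≤ n`. Positivity of `c` holds because, when `c = 0`, the relation "equal or adjacent" is
transitive, so a connected graph would be complete.
-/

open Matrix SimpleGraph

section

variable {V : Type*} [Fintype V] [DecidableEq V] {G : SimpleGraph V} [DecidableRel G.Adj]
  {n k a c : ℕ}

lemma srg_pos_of_connected (h : G.IsSRGWith n k a c) (hG : G.Connected) (hnc : G ≠ ⊤) :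
    0 < c := by
  by_contra hc
  obtain rfl : c = 0 := by omega
  have key : ∀ u v, G.Walk u v → u = v ∨ G.Adj u v := by
    intro u v p
    induction p with
    | nil => exact Or.inl rfl
    | @cons u w v huw p ih =>
      by_contra! hcon
      rcases ih with rfl | hwv
      · exact hcon.2 huw
      · have h0 := h.of_not_adj hcon.1 hcon.2
        rw [Fintype.card_eq_zero_iff] at h0
        exact h0.elim ⟨w, by simp [mem_commonNeighbors, huw, hwv.symm]⟩
  refine hnc (eq_top_iff.2 fun u v huv => ?_)
  obtain ⟨p⟩ := hG.preconnected u v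
  exact (key u v p).resolve_left huv

/-- The Laplacian of a strongly regular graph satisfies a quadratic equation modulo `J`. The
coefficient `-n c` of the identity encodes the parameter relation `k (k - a - 1) = (n - k - 1) c`;
it is recovered here by multiplying with `J`. -/
lemma srg_lapMatrix_sq [Nonempty V] (h : G.IsSRGWith n k a c) :
    G.lapMatrix ℝ * G.lapMatrix ℝ = (2 * k - a + c : ℝ) • G.lapMatrix ℝ
      - (n * c : ℝ) • (1 : Matrix V V ℝ) + (c : ℝ) • Matrix.of fun _ _ => (1 : ℝ) := by
  set J : Matrix V V ℝ := Matrix.of fun _ _ => (1 : ℝ) with hJ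
  have hL : G.lapMatrix ℝ = (k : ℝ) • (1 : Matrix V V ℝ) - G.adjMatrix ℝ := by
    ext i j
    by_cases hij : i = j <;>
      simp [lapMatrix, degMatrix, h.regular.degree_eq, hij]
  have hC : Gᶜ.adjMatrix ℝ = J - 1 - G.adjMatrix ℝ := by
    ext i j
    by_cases hij : i = j
    · simp [hJ, hij]
    · by_cases ha : G.Adj i j <;> simp [hJ, adjMatrix_apply, hij, ha]
  have hA := h.matrix_eq (α := ℝ)
  rw [hC, sq] at hA
  have hLL : G.lapMatrix ℝ * G.lapMatrix ℝ = (2 * k - a + c : ℝ) • G.lapMatrix ℝ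
      + (k - c + a * k - c * k - k ^ 2 : ℝ) • (1 : Matrix V V ℝ) + (c : ℝ) • J := by
    rw [hL, sub_mul, mul_sub, mul_sub, hA]
    simp only [Matrix.smul_mul, Matrix.mul_smul, one_mul, mul_one]
    module
  have hLJ : G.lapMatrix ℝ * J = 0 := by
    ext i j
    have := congrFun (G.lapMatrix_mulVec_const_eq_zero (R := ℝ)) i
    simpa [Matrix.mul_apply, Matrix.mulVec, dotProduct, hJ] using this
  have hJJ : J * J = (n : ℝ) • J := by
    ext i j
    simp [Matrix.mul_apply, hJ, h.card]
  have ht : (k - c + a * k - c * k - k ^ 2 : ℝ) = -(n * c) := by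
    have h1 := congrArg (· * J) hLL
    simp only [add_mul, Matrix.smul_mul, mul_assoc, hLJ, hJJ, one_mul, mul_zero, smul_zero] at h1
    obtain ⟨v⟩ := ‹Nonempty V›
    have h2 := congrFun (congrFun h1 v) v
    simp [hJ] at h2
    linarith
  rw [hLL, ht]
  module

lemma srg_coeff_bounds (h : G.IsSRGWith n k a c) (hnc : G ≠ ⊤) (hc : 0 < c) :
    a ≤ k ∧ 2 * k + c ≤ a + 2 * n := by
  obtain ⟨u, v, huv, hadj⟩ : ∃ u v, u ≠ v ∧ ¬ G.Adj u v := by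
    by_contra! hcon
    exact hnc (eq_top_iff.2 fun u v huv => hcon u v huv)
  have h0 := h.of_not_adj huv hadj
  have hcn : c ≤ n := by
    rw [← h0, ← h.card]
    exact Fintype.card_le_of_injective _ Subtype.val_injective
  obtain ⟨w, hw⟩ : Nonempty (G.commonNeighbors u v) := Fintype.card_pos_iff.1 (h0 ▸ hc)
  have huw : G.Adj u w := hw.1
  have hak : a ≤ k := by
    rw [← h.of_adj u w huw, ← h.regular.degree_eq u]
    exact G.card_commonNeighbors_le_degree_left u w
  have hun := h.card_neighborFinset_union_of_adj huw
  have hle : (G.neighborFinset u ∪ G.neighborFinset w).card ≤ n := h.card ▸ Finset.card_le_univ _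
  omega

end

/-- For a connected, non-complete strongly regular graph with parameters `(n, k, a, c)`,
the largest absolute value `o` of an off-diagonal entry of the Moore–Penrose
pseudoinverse `B` of the Laplacian satisfies `o ≤ 2/(n c)`. -/
theorem srg_lapMatrix_pinv_offdiag_max_le
    {V : Type*} [Fintype V] [DecidableEq V]
    (G : SimpleGraph V) [DecidableRel G.Adj]
    {n k a c : ℕ}
    (hsrg : G.IsSRGWith n k a c)
    (hG : G.Connected)
    (hnc : G ≠ ⊤)
    (B : Matrix V V ℝ)
    (hB1 : G.lapMatrix ℝ * B * G.lapMatrix ℝ = G.lapMatrix ℝ)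
    (hB2 : B * G.lapMatrix ℝ * B = B)
    (hB3 : (G.lapMatrix ℝ * B)ᵀ = G.lapMatrix ℝ * B)
    (hB4 : (B * G.lapMatrix ℝ)ᵀ = B * G.lapMatrix ℝ)
    (o : ℝ)
    (ho : IsGreatest {r : ℝ | ∃ i j : V, i ≠ j ∧ |B i j| = r} o) :
    o ≤ 2 / ((n : ℝ) * c) := by
  classical
  have : Nonempty V := hG.nonempty
  have hc := srg_pos_of_connected hsrg hG hnc
  obtain ⟨hak, hs⟩ := srg_coeff_bounds hsrg hnc hc
  have hn : 0 < n := hsrg.card ▸ Fintype.card_pos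
  have hq := srg_lapMatrix_sq hsrg
  set J : Matrix V V ℝ := Matrix.of fun _ _ => (1 : ℝ) with hJ
  set L := G.lapMatrix ℝ with hL
  have hJt : Jᵀ = J := by ext; simp [hJ]
  have hLt : Lᵀ = L := G.isSymm_lapMatrix (R := ℝ)
  have hLJ : L * J = 0 := by
    ext i j
    have := congrFun (G.lapMatrix_mulVec_const_eq_zero (R := ℝ)) i
    simpa [Matrix.mul_apply, Matrix.mulVec, dotProduct, hJ] using this
  have hJL : J * L = 0 := by
    rw [← hJt, ← hLt, ← Matrix.transpose_mul, hLJ, Matrix.transpose_zero]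
  -- Symmetry of `B L` and `L B` transfers `L J = J L = 0` to the other side.
  have hJBL : J * (B * L) = 0 := by
    rw [← hB4, ← hJt, ← Matrix.transpose_mul, mul_assoc, hLJ, mul_zero, Matrix.transpose_zero]
  have hBJ : B * J = 0 := by
    have : L * B * J = 0 := by
      rw [← hB3, ← hJt, ← Matrix.transpose_mul, ← mul_assoc, hJL, zero_mul,
        Matrix.transpose_zero]
    rw [← hB2, mul_assoc B, mul_assoc B, this, mul_zero]
  have hBL : (n * c : ℝ) • (B * L) = (n * c : ℝ) • (1 : Matrix V V ℝ) - (c : ℝ) • J := by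
    have h1 : L * L * (B * L) = L * L := by
      rw [mul_assoc, ← mul_assoc L B L, hB1]
    rw [hq] at h1
    simp only [add_mul, sub_mul, Matrix.smul_mul, one_mul, hJBL, smul_zero, add_zero] at h1
    rw [← mul_assoc, hB1] at h1
    rw [← sub_eq_zero] at h1 ⊢
    rw [← neg_eq_zero, ← h1]
    module
  have hB : (n * c : ℝ) • (n * c : ℝ) • B = (2 * k - a + c : ℝ) •
      ((n * c : ℝ) • (1 : Matrix V V ℝ) - (c : ℝ) • J) - (n * c : ℝ) • L := by
    have h1 : B * (L * L) = (2 * k - a + c : ℝ) • (B * L) - (n * c : ℝ) • B := by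
      rw [hq]
      simp only [mul_add, mul_sub, Matrix.mul_smul, mul_one, hBJ, smul_zero, add_zero]
    have h2 : (n * c : ℝ) • (B * (L * L)) = (n * c : ℝ) • L := by
      rw [← mul_assoc, ← Matrix.smul_mul, hBL, sub_mul, Matrix.smul_mul, Matrix.smul_mul, hJL,
        one_mul, smul_zero, sub_zero]
    rw [← h2, h1, ← hBL]
    module
  obtain ⟨i, j, hij, rfl⟩ := ho.1
  have hn' : (0 : ℝ) < n := by exact_mod_cast hn
  have hc' : (0 : ℝ) < c := by exact_mod_cast hc
  have hak' : (a : ℝ) ≤ k := by exact_mod_cast hak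
  have hs' : (2 * k + c : ℝ) ≤ a + 2 * n := by exact_mod_cast hs
  have hk' : (0 : ℝ) ≤ k := Nat.cast_nonneg k
  have he := congrFun (congrFun hB i) j
  have hLij : L i j = - if G.Adj i j then 1 else 0 := by
    simp [hL, lapMatrix, degMatrix, hij, adjMatrix_apply]
  simp only [Matrix.smul_apply, Matrix.sub_apply, hLij, Matrix.one_apply_ne hij, hJ,
    Matrix.of_apply, smul_eq_mul] at he
  have he' : n * (n * c * B i j) = n * (if G.Adj i j then 1 else 0) - (2 * k - a + c : ℝ) := by
    apply mul_left_cancel₀ hc'.ne'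
    linarith
  rw [le_div_iff₀ (by positivity), ← abs_of_pos (show (0 : ℝ) < n * c by positivity), ← abs_mul,
    mul_comm, abs_le]
  constructor <;> refine le_of_mul_le_mul_left ?_ hn' <;> rw [he'] <;> split_ifs <;> linarith
end
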